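/- arXiv:1904.01800 — 2 statements merged into one kernel-verified Lean document; each statement's English description precedes it below -/
import Mathlib

section
/- Let F ∈ ℝ[x_1,…,x_n] be a homogeneous polynomial of degree r ≥ 3 and let a ∈ ℝ^n. Set ∂_aF = Σ_{i=1}^n a_i·∂F/∂x_i, a homogeneous polynomial of degree r−1. Then the following are equivalent: (i) for every real s ≥ (r−1)/r (respectively s > (r−1)/r), the matrix (−F·H_F + s·(∇F)ᵀ(∇F)) evaluated at a is positive semidefinite (respectively positive definite); (ii) for every real s' ≥ (r−2)/(r−1) (respectively s' > (r−2)/(r−1)), the matrix (−(∂_aF)·H_{∂_aF} + s'·(∇∂_aF)ᵀ(∇∂_aF)) evaluated at a is positive semidefinite (respectively positive definite). That is, F is (strictly) homogeneous log-concave at a if and only if ∂_aF is (strictly) homogeneous log-concave at a. -/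
/-!
By Euler's identity applied to `F` and to its first and second partial derivatives,
`∂_a F`, `∇ ∂_a F` and `H_{∂_a F}` evaluated at `a` are `r`, `r - 1` and `r - 2` times
`F`, `∇ F` and `H_F` evaluated at `a`. Hence the matrix of `∂_a F` with parameter `s'` is the
positive multiple `r (r - 2)` of the matrix of `F` with parameter
`s = (r - 1)² / (r (r - 2)) * s'`, and this increasing bijection of parameters sends the threshold
`(r - 2) / (r - 1)` to `(r - 1) / r`.
-/

open MvPolynomial

theorem pderiv_pderiv_comm {n : ℕ} (i j : Fin n) (F : MvPolynomial (Fin n) ℝ) :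
    pderiv i (pderiv j F) = pderiv j (pderiv i F) := by
  -- the commutator is a derivation that kills every variable
  have h : ⁅pderiv (R := ℝ) i, pderiv (R := ℝ) j⁆ = 0 := by
    apply MvPolynomial.derivation_ext
    intro k
    simp [Derivation.commutator_apply, pderiv_X, Pi.single_apply, apply_ite]
  have h2 := congrArg (fun D => D F) h
  simpa [Derivation.commutator_apply, sub_eq_zero] using h2

theorem eval_euler {n d : ℕ} {G : MvPolynomial (Fin n) ℝ} (hG : G.IsHomogeneous d)
    (a : Fin n → ℝ) : ∑ k, a k * eval a (pderiv k G) = d * eval a G := by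
  have h := congrArg (eval a) hG.sum_X_mul_pderiv
  simpa using h

/-- The scaling of matrices that underlies the equivalence. On the side of `∂_a F` the
parameter is written as `s' = r (r - 2) / (r - 1)² * s`, so that no division by `r - 2` occurs. -/
theorem dirDeriv_matrix_eq (n r : ℕ) (hr : 3 ≤ r)
    (F : MvPolynomial (Fin n) ℝ) (hhom : F.IsHomogeneous r) (a : Fin n → ℝ) (s : ℝ) :
    (Matrix.of fun i j : Fin n =>
      -(eval a (∑ k, a k • pderiv k F)) *
          eval a (pderiv i (pderiv j (∑ k, a k • pderiv k F)))
        + (r * (r - 2) / (r - 1) ^ 2 * s) * (eval a (pderiv i (∑ k, a k • pderiv k F)) *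
          eval a (pderiv j (∑ k, a k • pderiv k F)))) =
    ((r : ℝ) * (r - 2)) • (Matrix.of fun i j : Fin n =>
      -(eval a F) * eval a (pderiv i (pderiv j F))
        + s * (eval a (pderiv i F) * eval a (pderiv j F))) := by
  have hr' : (3 : ℝ) ≤ r := by exact_mod_cast hr
  have h0 : eval a (∑ k, a k • pderiv k F) = r * eval a F := by
    rw [← eval_euler hhom a]; simp
  have h1 (i : Fin n) : eval a (pderiv i (∑ k, a k • pderiv k F))
      = (r - 1) * eval a (pderiv i F) := by
    have h := eval_euler (hhom.pderiv (i := i)) a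
    rw [Nat.cast_sub (by lia), Nat.cast_one] at h
    rw [← h]
    simp only [map_sum, Derivation.map_smul, smul_eval]
    exact Finset.sum_congr rfl fun k _ => by rw [pderiv_pderiv_comm i k]
  have h2 (i j : Fin n) : eval a (pderiv i (pderiv j (∑ k, a k • pderiv k F)))
      = (r - 2) * eval a (pderiv i (pderiv j F)) := by
    have h := eval_euler ((hhom.pderiv (i := j)).pderiv (i := i)) a
    rw [Nat.sub_sub, Nat.cast_sub (by lia)] at h
    norm_num at h
    rw [← h]
    simp only [map_sum, Derivation.map_smul, smul_eval]
    refine Finset.sum_congr rfl fun k _ => ?_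
    rw [pderiv_pderiv_comm j k, pderiv_pderiv_comm i k]
  have hne : (r : ℝ) - 1 ≠ 0 := by linarith
  ext i j
  simp only [Matrix.of_apply, Matrix.smul_apply, smul_eq_mul, h0, h1, h2]
  field_simp

/-- for a homogeneous polynomial `F` of degree `r ≥ 3` and a point `a`, `F` is
(strictly) homogeneous log-concave at `a` iff the directional derivative
`∂_a F = Σ a_i ∂F/∂x_i` (homogeneous of degree `r - 1`) is (strictly) homogeneous log-concave
at `a`: the positive semidefiniteness condition for all `s ≥ (r-1)/r` holds for `F` iff it holds
for `∂_a F` for all `s' ≥ (r-2)/(r-1)`, and likewise with strict inequalities and positive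
definiteness. -/
theorem homog_logConcave_iff_dirDeriv (n r : ℕ) (hr : 3 ≤ r)
    (F : MvPolynomial (Fin n) ℝ) (hhom : F.IsHomogeneous r)
    (a : Fin n → ℝ)
    (Fa : MvPolynomial (Fin n) ℝ) (hFa : Fa = ∑ i : Fin n, a i • pderiv i F) :
    ((∀ s : ℝ, ((r : ℝ) - 1) / (r : ℝ) ≤ s →
        (Matrix.of fun i j : Fin n =>
          -(eval a F) * eval a (pderiv i (pderiv j F))
            + s * (eval a (pderiv i F) * eval a (pderiv j F))).PosSemidef) ↔
      (∀ s' : ℝ, ((r : ℝ) - 2) / ((r : ℝ) - 1) ≤ s' →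
        (Matrix.of fun i j : Fin n =>
          -(eval a Fa) * eval a (pderiv i (pderiv j Fa))
            + s' * (eval a (pderiv i Fa) * eval a (pderiv j Fa))).PosSemidef)) ∧
    ((∀ s : ℝ, ((r : ℝ) - 1) / (r : ℝ) < s →
        (Matrix.of fun i j : Fin n =>
          -(eval a F) * eval a (pderiv i (pderiv j F))
            + s * (eval a (pderiv i F) * eval a (pderiv j F))).PosDef) ↔
      (∀ s' : ℝ, ((r : ℝ) - 2) / ((r : ℝ) - 1) < s' →
        (Matrix.of fun i j : Fin n =>
          -(eval a Fa) * eval a (pderiv i (pderiv j Fa))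
            + s' * (eval a (pderiv i Fa) * eval a (pderiv j Fa))).PosDef)) := by
  subst hFa
  have hr' : (3 : ℝ) ≤ r := by exact_mod_cast hr
  have hr0 : (0 : ℝ) < r := by linarith
  have hr1 : (0 : ℝ) < r - 1 := by linarith
  have hr2 : (0 : ℝ) < r - 2 := by linarith
  have hc : (0 : ℝ) < r * (r - 2) := by positivity
  have hm : (0 : ℝ) < r * (r - 2) / (r - 1) ^ 2 := by positivity
  have hthr : ((r : ℝ) - 2) / (r - 1) = r * (r - 2) / (r - 1) ^ 2 * ((r - 1) / r) := by
    field_simp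
  have key := dirDeriv_matrix_eq n r hr F hhom a
  have surj (s' : ℝ) : ∃ s, s' = r * (r - 2) / (r - 1) ^ 2 * s :=
    ⟨s' / (r * (r - 2) / (r - 1) ^ 2), by field_simp⟩
  refine ⟨⟨fun h s' hs' => ?_, fun h s hs => ?_⟩, ⟨fun h s' hs' => ?_, fun h s hs => ?_⟩⟩
  · obtain ⟨s, rfl⟩ := surj s'
    rw [hthr, mul_le_mul_iff_right₀ hm] at hs'
    rw [key]
    exact (h s hs').smul hc.le
  · have h3 := h _ (hthr.trans_le (mul_le_mul_of_nonneg_left hs hm.le))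
    rw [key] at h3
    simpa only [inv_smul_smul₀ hc.ne'] using h3.smul (inv_pos.2 hc).le
  · obtain ⟨s, rfl⟩ := surj s'
    rw [hthr, mul_lt_mul_iff_right₀ hm] at hs'
    rw [key]
    exact (h s hs').smul hc
  · have h3 := h _ (hthr.trans_lt (mul_lt_mul_of_pos_left hs hm))
    rw [key] at h3
    simpa only [inv_smul_smul₀ hc.ne'] using h3.smul (inv_pos.2 hc)
end

section
/- Let Γ be a finite connected simple graph with r+1 vertices, where r+1 ≥ 3, and n edges, where n ≥ 3, with Kirchhoff polynomial F_Γ, and let a ∈ (ℝ_{>0})^n. For each integer ℓ with 0 ≤ ℓ ≤ r−2, the polynomial ∂_a^ℓ F_Γ (the ℓ-fold application of the directional derivative ∂_a = Σ_{i=1}^n a_i·∂/∂x_i to F_Γ, a homogeneous polynomial of degree r−ℓ) is strictly homogeneous log-concave at a; in particular, the Hessian matrix of ∂_a^ℓ F_Γ evaluated at a is nonsingular with exactly one positive eigenvalue and n−1 negative eigenvalues. -/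
/-!
By the matrix-tree theorem `F(x) = det L(x)`, where `L(x) = ∑ x_e v_e v_eᵀ` is the reduced weighted
Laplacian and the `v_e` are the oriented incidence vectors with the root coordinate deleted
(`eval_kirchhoff`, from the Cauchy–Binet expansion `det_sum_vecMulVec`). Since `F` is multiaffine,
its partial derivatives at `a` can be read off from rank-one and rank-two updates of `L = L(a)`:
with `K_ij = v_iᵀ L⁻¹ v_j` one gets `∂_i F = F K_ii` and `∂_i ∂_j F = F (K_ii K_jj - K_ij²)`.

Euler's identity reduces general `ℓ` to `ℓ = 0`: the value, gradient and Hessian of `∂_a^ℓ F` at `a`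
are those of `F` multiplied by falling factorials of `r`, `r - 1` and `r - 2`
(`eval_iterate_dirDeriv`).

Up to a positive factor, the matrix in question is therefore `K_ij² - (1 - s') K_ii K_jj` for some
`s' > (r - 1) / r`. Writing `L⁻¹ = Cᵀ C` and `M = ∑ y_i (C v_i)(C v_i)ᵀ`, its quadratic form at `y`
is `tr(M²) - (1 - s') (tr M)²`, which is positive for `M ≠ 0` because `(tr M)² ≤ r tr(M²)`; and
`M = 0` forces `y = 0` since the `v_e v_eᵀ` of a simple graph are linearly independent
(`gram_form_posDef`, `incVec_linearIndependent`).

Consequently the Hessian is negative definite on the hyperplane orthogonal to the gradient. Its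
diagonal vanishes, so its trace is zero, and these two facts determine its signature
(`signature_of_neg_on_hyperplane`).
-/

open MvPolynomial

/-- A spanning tree of a graph `G`, given as a set `T` of edges of `G` with `|V| - 1` edges
whose spanning subgraph is connected. -/
def IsSpanningTree {V : Type} [Fintype V] [DecidableEq V] (G : SimpleGraph V)
    (T : Finset G.edgeSet) : Prop :=
  T.card = Fintype.card V - 1 ∧
    (SimpleGraph.fromEdgeSet (Subtype.val '' (T : Set G.edgeSet))).Connected

open scoped Classical in
/-- The Kirchhoff polynomial of a graph. -/
noncomputable def kirchhoff {V : Type} [Fintype V] [DecidableEq V] (G : SimpleGraph V)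
    [Fintype G.edgeSet] : MvPolynomial G.edgeSet ℝ :=
  ∑ T : Finset G.edgeSet, if IsSpanningTree G T then ∏ e ∈ T, X e else 0


open Matrix

/-! ### Euler's identity for iterated directional derivatives -/

theorem pderiv_comm' {σ : Type*} (i j : σ) (P : MvPolynomial σ ℝ) :
    pderiv i (pderiv j P) = pderiv j (pderiv i P) := by
  classical
  have h : ⁅pderiv (R := ℝ) i, pderiv (R := ℝ) j⁆ = 0 := by
    refine MvPolynomial.derivation_ext fun k => ?_
    rw [Derivation.commutator_apply, pderiv_X, pderiv_X]
    simp [Pi.single_apply, apply_ite]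
  have := congrArg (fun D => D P) h
  rw [Derivation.commutator_apply] at this
  exact sub_eq_zero.mp this

section Euler
variable {σ : Type*} [Fintype σ]

/-- The directional derivative `∂_a = ∑ i, a i • ∂/∂x_i`. -/
noncomputable def dirDeriv (a : σ → ℝ) (P : MvPolynomial σ ℝ) : MvPolynomial σ ℝ :=
  ∑ i, a i • pderiv i P

theorem dirDeriv_homog (a : σ → ℝ) {P : MvPolynomial σ ℝ} {d : ℕ} (h : P.IsHomogeneous d) :
    (dirDeriv a P).IsHomogeneous (d - 1) :=
  IsHomogeneous.sum _ _ _ fun i _ => by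
    rw [MvPolynomial.smul_eq_C_mul]
    simpa using (isHomogeneous_C σ (a i)).mul h.pderiv

theorem pderiv_iterate_dirDeriv (a : σ → ℝ) (i : σ) (ℓ : ℕ) (P : MvPolynomial σ ℝ) :
    pderiv i ((dirDeriv a)^[ℓ] P) = (dirDeriv a)^[ℓ] (pderiv i P) := by
  have : Function.Commute (pderiv (R := ℝ) i) (dirDeriv a) := fun Q => by
    simp only [dirDeriv, map_sum, Derivation.map_smul, pderiv_comm' i]
  exact this.iterate_right ℓ P

/-- Iterated Euler identity: on a homogeneous polynomial of degree `d`, evaluating `∂_a^ℓ P` at the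
point `a` itself multiplies `P(a)` by `d (d - 1) ⋯ (d - ℓ + 1)`. -/
theorem eval_iterate_dirDeriv (a : σ → ℝ) (ℓ : ℕ) {d : ℕ} {P : MvPolynomial σ ℝ}
    (h : P.IsHomogeneous d) :
    eval a ((dirDeriv a)^[ℓ] P) = d.descFactorial ℓ * eval a P := by
  induction ℓ generalizing d P with
  | zero => simp
  | succ ℓ ih =>
    rw [Function.iterate_succ_apply, ih (dirDeriv_homog a h)]
    have key : eval a (dirDeriv a P) = d * eval a P := by
      have := congrArg (eval a) h.sum_X_mul_pderiv
      simpa [dirDeriv] using this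
    rw [key]
    cases d with
    | zero => simp
    | succ d => rw [Nat.succ_descFactorial_succ]; push_cast [Nat.add_sub_cancel]; ring

end Euler

/-! ### Multiaffine polynomials -/

section Multiaffine
variable {σ : Type*} [DecidableEq σ]

/-- Polynomials of degree at most one in each variable, encoded as the linear span of the
squarefree monomials. -/
def IsMultiaffine {σ : Type*} (P : MvPolynomial σ ℝ) : Prop :=
  P ∈ Submodule.span ℝ (Set.range fun T : Finset σ => ∏ e ∈ T, (X e : MvPolynomial σ ℝ))

theorem pderiv_prod_X (i : σ) (T : Finset σ) :
    pderiv i (∏ e ∈ T, (X e : MvPolynomial σ ℝ)) =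
      if i ∈ T then ∏ e ∈ T.erase i, X e else 0 := by
  have hnot : ∀ S : Finset σ, i ∉ S → pderiv i (∏ e ∈ S, (X e : MvPolynomial σ ℝ)) = 0 := by
    intro S
    induction S using Finset.induction_on with
    | empty => simp
    | insert k S hk ih =>
      intro hi
      rw [Finset.mem_insert, not_or] at hi
      rw [Finset.prod_insert hk, pderiv_mul, ih hi.2, pderiv_X_of_ne (Ne.symm hi.1)]
      simp
  split_ifs with hi
  · rw [← Finset.mul_prod_erase _ _ hi, pderiv_mul, hnot _ (by simp)]
    simp
  · exact hnot T hi

theorem IsMultiaffine.pderiv {P : MvPolynomial σ ℝ} (h : IsMultiaffine P) (i : σ) :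
    IsMultiaffine (pderiv i P) := by
  unfold IsMultiaffine at h ⊢
  induction h using Submodule.span_induction with
  | mem x hx =>
    obtain ⟨T, rfl⟩ := hx
    simp only
    rw [pderiv_prod_X]
    split_ifs
    · exact Submodule.subset_span ⟨_, rfl⟩
    · exact zero_mem _
  | zero => simp
  | add x y _ _ hx hy => rw [map_add]; exact add_mem hx hy
  | smul c x _ hx => rw [Derivation.map_smul]; exact Submodule.smul_mem _ _ hx

/-- A multiaffine polynomial is affine in `x_i`, so its first-order Taylor expansion in that
direction is exact. -/
theorem IsMultiaffine.eval_add_single {P : MvPolynomial σ ℝ} (h : IsMultiaffine P) (i : σ)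
    (a : σ → ℝ) :
    eval (a + Pi.single i 1) P = eval a P + eval a (MvPolynomial.pderiv i P) := by
  unfold IsMultiaffine at h
  induction h using Submodule.span_induction with
  | mem x hx =>
    obtain ⟨T, rfl⟩ := hx
    simp only
    rw [pderiv_prod_X]
    have hne : ∀ S : Finset σ, i ∉ S → ∏ e ∈ S, (a + Pi.single i 1 : σ → ℝ) e = ∏ e ∈ S, a e :=
      fun S hS => Finset.prod_congr rfl fun e he => by
        have : e ≠ i := fun h => hS (h ▸ he)
        simp [this]
    split_ifs with hi
    · simp only [map_prod, eval_X]
      rw [← Finset.mul_prod_erase _ _ hi, ← Finset.mul_prod_erase _ a hi,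
        hne _ (Finset.notMem_erase i T)]
      simp; ring
    · simp only [map_prod, eval_X, map_zero, add_zero]
      exact hne _ hi
  | zero => simp
  | add x y _ _ hx hy => simp only [map_add, hx, hy]; ring
  | smul c x _ hx => simp only [Derivation.map_smul, smul_eval, hx]; ring

theorem IsMultiaffine.pderiv_pderiv_self {P : MvPolynomial σ ℝ} (h : IsMultiaffine P) (i : σ) :
    MvPolynomial.pderiv i (MvPolynomial.pderiv i P) = 0 := by
  unfold IsMultiaffine at h
  induction h using Submodule.span_induction with
  | mem x hx =>
    obtain ⟨T, rfl⟩ := hx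
    simp only
    rw [pderiv_prod_X]
    split_ifs with hi
    · rw [pderiv_prod_X]; simp
    · simp
  | zero => simp
  | add x y _ _ hx hy => simp only [map_add, hx, hy]; simp
  | smul c x _ hx => simp only [Derivation.map_smul, hx]; simp

end Multiaffine
/-! ### Linear algebra: signatures and positive definiteness -/

/-- A traceless symmetric matrix that is negative definite on a hyperplane `g ⬝ᵥ y = 0` has exactly
one positive eigenvalue, all others being negative: the span of two eigenvectors with nonnegative
eigenvalues would meet the hyperplane, and the zero trace forces some eigenvalue to be positive. -/
theorem signature_of_neg_on_hyperplane {ι : Type*} [Fintype ι] [DecidableEq ι]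
    (hcard : 2 ≤ Fintype.card ι) {H : Matrix ι ι ℝ} (hH : H.IsHermitian) (htr : H.trace = 0)
    (g : ι → ℝ) (hneg : ∀ y : ι → ℝ, y ≠ 0 → g ⬝ᵥ y = 0 → y ⬝ᵥ (H *ᵥ y) < 0) :
    H.det ≠ 0 ∧ (Finset.univ.filter fun i => 0 < hH.eigenvalues i).card = 1 ∧
      (Finset.univ.filter fun i => hH.eigenvalues i < 0).card = Fintype.card ι - 1 := by
  set u : ι → ι → ℝ := fun i => ⇑(hH.eigenvectorBasis i) with hu
  have hon : ∀ i j, u i ⬝ᵥ u j = if i = j then 1 else 0 := by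
    intro i j
    have := (orthonormal_iff_ite.mp hH.eigenvectorBasis.orthonormal) j i
    rw [EuclideanSpace.inner_eq_star_dotProduct] at this
    simpa [hu, eq_comm] using this
  have hev : ∀ i, H *ᵥ u i = hH.eigenvalues i • u i := fun i => hH.mulVec_eigenvectorBasis i
  have hone : ∀ i j, 0 ≤ hH.eigenvalues i → 0 ≤ hH.eigenvalues j → i = j := by
    intro i j hi hj
    by_contra hij
    have key : ∀ p q : ℝ, (p • u i + q • u j) ⬝ᵥ (H *ᵥ (p • u i + q • u j)) =
        p ^ 2 * hH.eigenvalues i + q ^ 2 * hH.eigenvalues j := by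
      intro p q
      simp only [mulVec_add, mulVec_smul, hev, add_dotProduct, dotProduct_add, smul_dotProduct,
        dotProduct_smul, hon, if_neg hij, if_neg (Ne.symm hij), smul_eq_mul, if_true]
      ring
    have hdot : ∀ p q : ℝ, (p • u i + q • u j) ⬝ᵥ (p • u i + q • u j) = p ^ 2 + q ^ 2 := by
      intro p q
      simp only [add_dotProduct, dotProduct_add, smul_dotProduct,
        dotProduct_smul, hon, if_neg hij, if_neg (Ne.symm hij), smul_eq_mul, if_true]
      ring
    obtain ⟨p, q, hpq, hg⟩ : ∃ p q : ℝ, p ^ 2 + q ^ 2 ≠ 0 ∧ p * (g ⬝ᵥ u i) + q * (g ⬝ᵥ u j) = 0 := by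
      by_cases h : g ⬝ᵥ u i = 0
      · exact ⟨1, 0, by norm_num, by simp [h]⟩
      · exact ⟨-(g ⬝ᵥ u j), g ⬝ᵥ u i, by positivity, by ring⟩
    have := hneg (p • u i + q • u j) (fun h0 => hpq (by rw [← hdot, h0]; simp))
      (by simpa [dotProduct_add, dotProduct_smul] using hg)
    rw [key] at this
    nlinarith [mul_nonneg (sq_nonneg p) hi, mul_nonneg (sq_nonneg q) hj]
  have hsum : ∑ i, hH.eigenvalues i = 0 := by
    have := hH.trace_eq_sum_eigenvalues
    rw [htr] at this
    simpa using this.symm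
  obtain ⟨k, hk⟩ : ∃ k, 0 < hH.eigenvalues k := by
    by_contra! hle
    have hz := (Finset.sum_eq_zero_iff_of_nonpos fun i _ => hle i).mp hsum
    obtain ⟨i, j, hij⟩ := Fintype.exists_pair_of_one_lt_card (α := ι) (by omega)
    exact hij (hone i j (hz i (Finset.mem_univ _)).ge (hz j (Finset.mem_univ _)).ge)
  have hrest : ∀ i, i ≠ k → hH.eigenvalues i < 0 := fun i hi => by
    by_contra! h
    exact hi (hone i k h hk.le)
  refine ⟨?_, ?_, ?_⟩
  · rw [hH.det_eq_prod_eigenvalues]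
    refine Finset.prod_ne_zero_iff.mpr fun i _ => ?_
    by_cases h : i = k
    · subst h; simpa using hk.ne'
    · simpa using (hrest i h).ne
  · rw [Finset.card_eq_one]
    refine ⟨k, Finset.ext fun i => ?_⟩
    simp only [Finset.mem_filter, Finset.mem_univ, true_and, Finset.mem_singleton]
    exact ⟨fun h => hone i k h.le hk.le, fun h => h ▸ hk⟩
  · have : (Finset.univ.filter fun i => hH.eigenvalues i < 0) = Finset.univ.erase k := by
      ext i
      simp only [Finset.mem_filter, Finset.mem_univ, true_and, Finset.mem_erase, and_true]
      exact ⟨fun h h' => absurd hk (by rw [← h']; exact h.not_gt), hrest i⟩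
    rw [this, Finset.card_erase_of_mem (Finset.mem_univ _), Finset.card_univ]

open scoped MatrixOrder in
theorem exists_transpose_mul_self {m : Type*} [Fintype m] [DecidableEq m] {A : Matrix m m ℝ} (hA : A.PosDef) :
    ∃ C : Matrix m m ℝ, IsUnit C ∧ A = Cᵀ * C := by
  have h0 : 0 ≤ A := hA.posSemidef.nonneg
  have hC : A = (CFC.sqrt A)ᵀ * CFC.sqrt A := by
    have h1 : star (CFC.sqrt A) = CFC.sqrt A := (IsSelfAdjoint.of_nonneg (CFC.sqrt_nonneg A)).star_eq
    have h2 : (CFC.sqrt A)ᵀ = CFC.sqrt A := by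
      rwa [star_eq_conjTranspose, conjTranspose_eq_transpose_of_trivial] at h1
    rw [h2, CFC.sqrt_mul_sqrt_self A h0]
  refine ⟨CFC.sqrt A, ?_, hC⟩
  rw [isUnit_iff_isUnit_det, isUnit_iff_ne_zero]
  intro h
  have := hA.det_pos
  rw [hC, det_mul, h, mul_zero] at this
  exact this.false

/-- Writing `A = Cᵀ C`, `w i = C v_i` and `M = ∑ y i • w i (w i)ᵀ`, the quadratic form of the matrix
below is `α tr(M²) + β (tr M)²`. Its positivity follows from `(tr M)² ≤ (dim) tr(M²)` and from the
linear independence of the rank-one matrices `v_i v_iᵀ`. -/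
theorem gram_form_posDef {m ι : Type*} [Fintype m] [DecidableEq m] [Fintype ι]
    {A : Matrix m m ℝ} (hA : A.PosDef) (v : ι → m → ℝ)
    (hv : ∀ y : ι → ℝ, ∑ i, y i • vecMulVec (v i) (v i) = 0 → y = 0)
    {α β : ℝ} (hα : 0 < α) (hβ : 0 < α + Fintype.card m * β) :
    (Matrix.of fun i j : ι => α * (v i ⬝ᵥ (A *ᵥ v j)) ^ 2
      + β * ((v i ⬝ᵥ (A *ᵥ v i)) * (v j ⬝ᵥ (A *ᵥ v j)))).PosDef := by
  obtain ⟨C, hC, rfl⟩ := exists_transpose_mul_self hA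
  set w : ι → m → ℝ := fun i => C *ᵥ v i with hw
  have hK : ∀ i j, v i ⬝ᵥ ((Cᵀ * C) *ᵥ v j) = w i ⬝ᵥ w j := by
    intro i j
    rw [← mulVec_mulVec, dotProduct_mulVec, vecMul_transpose]
  simp only [hK]
  refine PosDef.of_dotProduct_mulVec_pos ?_ fun y hy => ?_
  · ext i j
    simp only [conjTranspose_apply, of_apply, star_trivial, dotProduct_comm (w j) (w i)]
    ring
  set M : Matrix m m ℝ := ∑ i, y i • vecMulVec (w i) (w i) with hM
  have hMapp : ∀ p q, M p q = ∑ i, y i * (w i p * w i q) := by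
    intro p q
    simp [hM, Matrix.sum_apply, vecMulVec_apply]
  have htr : ∑ p, M p p = ∑ i, y i * (w i ⬝ᵥ w i) := by
    simp only [hMapp, dotProduct, Finset.mul_sum]
    exact Finset.sum_comm
  have hsq : ∑ p, ∑ q, M p q ^ 2 = ∑ i, ∑ j, y i * y j * (w i ⬝ᵥ w j) ^ 2 := by
    have h1 : ∀ i j, y i * y j * (w i ⬝ᵥ w j) ^ 2 =
        ∑ p, ∑ q, (y i * (w i p * w i q)) * (y j * (w j p * w j q)) := by
      intro i j
      rw [sq, dotProduct, Finset.sum_mul_sum, Finset.mul_sum]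
      refine Finset.sum_congr rfl fun p _ => ?_
      rw [Finset.mul_sum]
      exact Finset.sum_congr rfl fun q _ => by ring
    have h2 : ∀ p q, M p q ^ 2 =
        ∑ i, ∑ j, (y i * (w i p * w i q)) * (y j * (w j p * w j q)) := by
      intro p q
      rw [hMapp, sq, Finset.sum_mul_sum]
    simp only [h1, h2]
    calc _ = ∑ p, ∑ i, ∑ q, ∑ j, (y i * (w i p * w i q)) * (y j * (w j p * w j q)) :=
          Finset.sum_congr rfl fun p _ => Finset.sum_comm
      _ = ∑ i, ∑ p, ∑ j, ∑ q, (y i * (w i p * w i q)) * (y j * (w j p * w j q)) := by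
          rw [Finset.sum_comm]
          exact Finset.sum_congr rfl fun i _ => Finset.sum_congr rfl fun p _ => Finset.sum_comm
      _ = _ := Finset.sum_congr rfl fun i _ => Finset.sum_comm
  have hform : star y ⬝ᵥ ((Matrix.of fun i j : ι => α * (w i ⬝ᵥ w j) ^ 2
      + β * ((w i ⬝ᵥ w i) * (w j ⬝ᵥ w j))) *ᵥ y) =
      α * ∑ p, ∑ q, M p q ^ 2 + β * (∑ p, M p p) ^ 2 := by
    rw [hsq, htr, sq (∑ i, _), Finset.sum_mul_sum, Finset.mul_sum, Finset.mul_sum,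
      ← Finset.sum_add_distrib]
    simp only [dotProduct, mulVec, of_apply, star_trivial]
    refine Finset.sum_congr rfl fun i _ => ?_
    rw [Finset.mul_sum, Finset.mul_sum, Finset.mul_sum, ← Finset.sum_add_distrib]
    exact Finset.sum_congr rfl fun j _ => by ring
  have hdiag : ∑ p, M p p ^ 2 ≤ ∑ p, ∑ q, M p q ^ 2 := Finset.sum_le_sum fun p _ =>
    Finset.single_le_sum (f := fun q => M p q ^ 2) (fun q _ => sq_nonneg _) (Finset.mem_univ p)
  have hcs : (∑ p, M p p) ^ 2 ≤ Fintype.card m * ∑ p, M p p ^ 2 := by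
    simpa using sq_sum_le_card_mul_sum_sq (s := Finset.univ) (f := fun p => M p p)
  have hpos : 0 < ∑ p, ∑ q, M p q ^ 2 := by
    refine lt_of_le_of_ne (Finset.sum_nonneg fun p _ => Finset.sum_nonneg fun q _ => sq_nonneg _)
      fun h0 => hy (hv y ?_)
    have hM0 : M = 0 := by
      ext p q
      have h1 := (Finset.sum_eq_zero_iff_of_nonneg
        fun p _ => Finset.sum_nonneg fun q _ => sq_nonneg (M p q)).mp h0.symm p (Finset.mem_univ _)
      have h2 := (Finset.sum_eq_zero_iff_of_nonneg
        fun q _ => sq_nonneg (M p q)).mp h1 q (Finset.mem_univ _)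
      simpa using h2
    have hMC : M = C * (∑ i, y i • vecMulVec (v i) (v i)) * Cᵀ := by
      rw [hM, Matrix.mul_sum, Matrix.sum_mul]
      refine Finset.sum_congr rfl fun i _ => ?_
      rw [Matrix.mul_smul, Matrix.smul_mul, mul_vecMulVec, vecMulVec_mul, vecMul_transpose]
    rw [hM0] at hMC
    have hCt : IsUnit Cᵀ := (isUnit_transpose C).mpr hC
    exact (hC.mul_right_eq_zero).mp ((hCt.mul_left_eq_zero).mp hMC.symm)
  rw [hform]
  generalize ∑ p, ∑ q, M p q ^ 2 = Q at *
  generalize ∑ p, M p p ^ 2 = D at *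
  generalize ∑ p, M p p = t at *
  have hle : t ^ 2 ≤ Fintype.card m * Q :=
    hcs.trans (mul_le_mul_of_nonneg_left hdiag (Nat.cast_nonneg _))
  rcases le_or_gt 0 β with hb | hb
  · positivity
  · nlinarith [mul_le_mul_of_nonpos_left hle hb.le, mul_pos hβ hpos]

/-! ### A Cauchy–Binet expansion -/

section CB
variable {m ι R : Type*} [Fintype m] [DecidableEq m] [Fintype ι] [CommRing R]

theorem det_sum_vecMulVec_expand (v : ι → m → R) (x : ι → R) :
    (∑ e, x e • vecMulVec (v e) (v e)).det =
      ∑ f : m → ι, (∏ p, x (f p)) * ((∏ p, v (f p) p) * (Matrix.of fun p => v (f p)).det) := by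
  have h1 : (∑ e, x e • vecMulVec (v e) (v e)) = fun p => ∑ e, (x e * v e p) • v e := by
    ext p q
    simp [Matrix.sum_apply, vecMulVec_apply, Finset.sum_apply, mul_assoc]
  rw [h1]
  change detRowAlternating.toMultilinearMap (fun p => ∑ e, (x e * v e p) • v e) = _
  rw [MultilinearMap.map_sum]
  refine Finset.sum_congr rfl fun f _ => ?_
  rw [MultilinearMap.map_smul_univ, Finset.prod_mul_distrib, smul_eq_mul, mul_assoc]
  rfl

/-- Cauchy–Binet for `B diag(x) Bᵀ`, where `B` has columns `v e`. The squared minor of `B` at `T` is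
expressed as the determinant of `∑ e ∈ T, v e (v e)ᵀ`. -/
theorem det_sum_vecMulVec [DecidableEq ι] (v : ι → m → R) (x : ι → R) :
    (∑ e, x e • vecMulVec (v e) (v e)).det =
      ∑ T : Finset ι, if T.card = Fintype.card m then
        (∏ e ∈ T, x e) * (∑ e ∈ T, vecMulVec (v e) (v e)).det else 0 := by
  set φ : (m → ι) → R := fun f => (∏ p, v (f p) p) * (Matrix.of fun p => v (f p)).det with hφ
  have hφ0 : ∀ f, ¬ Function.Injective f → φ f = 0 := by
    intro f hf
    simp only [Function.Injective, not_forall] at hf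
    obtain ⟨p, q, hpq, hne⟩ := hf
    have : (Matrix.of fun p => v (f p)).det = 0 :=
      det_zero_of_row_eq hne (by ext k; simp [hpq])
    simp [hφ, this]
  have hcard : ∀ f : m → ι, (Finset.univ.image f).card = Fintype.card m ↔ Function.Injective f := by
    intro f
    rw [← Finset.card_univ, Finset.card_image_iff, Finset.coe_univ, Set.injOn_univ]
  rw [det_sum_vecMulVec_expand, ← Finset.sum_fiberwise Finset.univ fun f => Finset.univ.image f]
  refine Finset.sum_congr rfl fun T _ => ?_
  split_ifs with hT
  -- Evaluating the expansion at the indicator of `T` isolates the functions with image `T`.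
  · have hdet : (∑ e ∈ T, vecMulVec (v e) (v e)).det =
        ∑ f with Finset.univ.image f = T, φ f := by
      have h1 : ∑ e ∈ T, vecMulVec (v e) (v e) =
          ∑ e, (if e ∈ T then (1 : R) else 0) • vecMulVec (v e) (v e) := by
        simp [Finset.sum_ite_mem, ite_smul]
      rw [h1, det_sum_vecMulVec_expand, Finset.sum_filter]
      refine Finset.sum_congr rfl fun f _ => ?_
      change _ * φ f = _
      by_cases hf : Function.Injective f
      · by_cases hsub : ∀ p, f p ∈ T
        · rw [if_pos, Finset.prod_eq_one fun p _ => if_pos (hsub p), one_mul]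
          refine Finset.eq_of_subset_of_card_le ?_ (by rw [(hcard f).mpr hf, hT])
          intro e he
          obtain ⟨p, -, rfl⟩ := Finset.mem_image.mp he
          exact hsub p
        · push Not at hsub
          obtain ⟨p, hp⟩ := hsub
          rw [if_neg, Finset.prod_eq_zero (Finset.mem_univ p) (if_neg hp), zero_mul]
          rintro rfl
          exact hp (Finset.mem_image_of_mem f (Finset.mem_univ p))
      · simp [hφ0 f hf]
    rw [hdet, Finset.mul_sum]
    refine Finset.sum_congr rfl fun f hf => ?_
    obtain rfl := (Finset.mem_filter.mp hf).2
    have hinj := (hcard f).mp hT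
    rw [Finset.prod_image fun p _ q _ h => hinj h]
  · refine Finset.sum_eq_zero fun f hf => ?_
    obtain rfl := (Finset.mem_filter.mp hf).2
    change _ * φ f = 0
    rw [hφ0 f fun h => hT ((hcard f).mpr h), mul_zero]
end CB

/-! ### Incidence vectors of a graph -/

theorem exists_ends {V : Type*} (e : Sym2 V) : ∃ p : V × V, s(p.1, p.2) = e := by
  induction e using Sym2.ind with
  | _ x y => exact ⟨(x, y), rfl⟩

/-- The two ends of an edge in an arbitrarily chosen order, that is, an orientation. -/
noncomputable def ends {V : Type*} (e : Sym2 V) : V × V := (exists_ends e).choose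

theorem ends_spec {V : Type*} (e : Sym2 V) : s((ends e).1, (ends e).2) = e := (exists_ends e).choose_spec

section Graph
variable {V : Type*} [DecidableEq V]

/-- The column of the oriented incidence matrix at `e`, with the coordinate of the root `o`
deleted. -/
noncomputable def incVec (R : Type*) [CommRing R] (o : V) (e : Sym2 V) : {v : V // v ≠ o} → R :=
  fun p => (if p.1 = (ends e).1 then 1 else 0) - (if p.1 = (ends e).2 then 1 else 0)

/-- Extension of a function on the non-root vertices by zero at the root. -/
def extZero {R : Type*} [CommRing R] {o : V} (z : {v : V // v ≠ o} → R) (u : V) : R :=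
  if h : u ≠ o then z ⟨u, h⟩ else 0

variable {R : Type*} [CommRing R]

theorem incVec_dotProduct [Fintype V] (o : V) (e : Sym2 V) (z : {v : V // v ≠ o} → R) :
    incVec R o e ⬝ᵥ z = extZero z (ends e).1 - extZero z (ends e).2 := by
  have key : ∀ u : V, ∑ p : {v : V // v ≠ o}, (if p.1 = u then 1 else 0) * z p = extZero z u := by
    intro u
    unfold extZero
    split_ifs with h
    · rw [Finset.sum_eq_single ⟨u, h⟩]
      · simp
      · intro p _ hp
        rw [if_neg fun h' => hp (Subtype.ext h'), zero_mul]
      · simp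
    · refine Finset.sum_eq_zero fun p _ => ?_
      rw [if_neg, zero_mul]
      rintro rfl
      exact h p.2
  simp only [dotProduct, incVec, sub_mul, Finset.sum_sub_distrib, key]

theorem extZero_eq_zero_of_connected {o : V} {K : SimpleGraph V} (hK : K.Connected)
    {z : {v : V // v ≠ o} → R} (h : ∀ u w, K.Adj u w → extZero z u = extZero z w) : z = 0 := by
  have hall : ∀ u, K.Reachable o u → extZero z u = 0 := by
    rintro u ⟨W⟩
    have : ∀ {x y : V} (W : K.Walk x y), extZero z x = extZero z y := by
      intro x y W
      induction W with
      | nil => rfl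
      | cons hadj _ ih => exact (h _ _ hadj).trans ih
    rw [← this W]
    simp [extZero]
  funext p
  have := hall p.1 (hK.preconnected o p.1)
  simpa [extZero, p.2] using this

theorem extZero_eq_of_dotProduct [Fintype V] {o : V} {z : {v : V // v ≠ o} → R} {u w : V}
    (h : incVec R o s(u, w) ⬝ᵥ z = 0) : extZero z u = extZero z w := by
  rw [incVec_dotProduct, sub_eq_zero] at h
  rcases Sym2.eq_iff.mp (ends_spec s(u, w)) with ⟨h1, h2⟩ | ⟨h1, h2⟩
  · rwa [h1, h2] at h
  · rw [h1, h2] at h; exact h.symm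

theorem sum_vecMulVec_mulVec {m ι : Type*} [Fintype m] (s : Finset ι) (v : ι → m → R) (x : ι → R)
    (z : m → R) : (∑ e ∈ s, x e • vecMulVec (v e) (v e)) *ᵥ z = ∑ e ∈ s, (x e * (v e ⬝ᵥ z)) • v e := by
  rw [Matrix.sum_mulVec]
  refine Finset.sum_congr rfl fun e _ => ?_
  rw [smul_mulVec, vecMulVec_mulVec, mul_smul]
  simp

theorem laplacian_posDef [Fintype V] {o : V} (G : SimpleGraph V) [Fintype G.edgeSet] (hG : G.Connected)
    {a : G.edgeSet → ℝ} (ha : ∀ e, 0 < a e) :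
    (∑ e, a e • vecMulVec (incVec ℝ o e.1) (incVec ℝ o e.1)).PosDef := by
  refine PosDef.of_dotProduct_mulVec_pos ?_ fun z hz => ?_
  · ext p q
    simp [Matrix.sum_apply, vecMulVec_apply, mul_comm]
  rw [sum_vecMulVec_mulVec Finset.univ (fun e : G.edgeSet => incVec ℝ o e.1), star_trivial,
    dotProduct_sum]
  have hterm : ∀ e : G.edgeSet, z ⬝ᵥ ((a e * (incVec ℝ o e.1 ⬝ᵥ z)) • incVec ℝ o e.1) =
      a e * (incVec ℝ o e.1 ⬝ᵥ z) ^ 2 := by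
    intro e
    rw [dotProduct_smul, dotProduct_comm z, smul_eq_mul]; ring
  simp only [hterm]
  have hnn : ∀ e : G.edgeSet, 0 ≤ a e * (incVec ℝ o e.1 ⬝ᵥ z) ^ 2 := fun e =>
    mul_nonneg (ha e).le (sq_nonneg _)
  refine lt_of_le_of_ne (Finset.sum_nonneg fun e _ => hnn e) fun h0 => hz ?_
  refine extZero_eq_zero_of_connected hG fun u w huw => extZero_eq_of_dotProduct ?_
  have := (Finset.sum_eq_zero_iff_of_nonneg fun e _ => hnn e).mp h0.symm ⟨s(u, w), huw⟩
    (Finset.mem_univ _)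
  simpa [(ha _).ne'] using this

theorem incVec_mul_incVec_of_ne (o : V) (e : Sym2 V) (p q : {v : V // v ≠ o}) (hpq : p ≠ q) :
    incVec R o e p * incVec R o e q = if e = s(p.1, q.1) then -1 else 0 := by
  have hne : p.1 ≠ q.1 := fun h => hpq (Subtype.ext h)
  have hm : e = s(p.1, q.1) ↔
      ((ends e).1 = p.1 ∧ (ends e).2 = q.1 ∨ (ends e).1 = q.1 ∧ (ends e).2 = p.1) := by
    conv_lhs => rw [← ends_spec e]
    exact Sym2.eq_iff
  simp only [incVec, hm]
  grind

theorem incVec_sq (o : V) (e : Sym2 V) (he : ¬ e.IsDiag) (p : {v : V // v ≠ o}) :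
    incVec R o e p * incVec R o e p = if p.1 ∈ e then 1 else 0 := by
  have h1 := ends_spec e
  have hd : (ends e).1 ≠ (ends e).2 := fun h => he (by rw [← h1]; exact h)
  have hm : p.1 ∈ e ↔ p.1 = (ends e).1 ∨ p.1 = (ends e).2 := by
    conv_lhs => rw [← h1]
    exact Sym2.mem_iff
  simp only [incVec, hm]
  grind

/-- For a simple graph the rank-one matrices `v_e v_eᵀ` are linearly independent: an off-diagonal
entry sees the unique edge joining its two vertices, and then a diagonal entry sees the edge to the
root. -/
theorem incVec_linearIndependent {o : V} (G : SimpleGraph V) [Fintype G.edgeSet]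
    (y : G.edgeSet → ℝ)
    (hy : ∑ e, y e • vecMulVec (incVec ℝ o e.1) (incVec ℝ o e.1) = 0) : y = 0 := by
  have happ : ∀ p q, ∑ e, y e * (incVec ℝ o e.1 p * incVec ℝ o e.1 q) = 0 := by
    intro p q
    have := congrFun (congrFun hy p) q
    simpa [Matrix.sum_apply, vecMulVec_apply] using this
  have hoff : ∀ e : G.edgeSet, o ∉ e.1 → y e = 0 := by
    rintro ⟨e, he⟩ ho
    induction e using Sym2.ind with
    | _ u w =>
    have hu : u ≠ o := fun h => ho (by simp [h])
    have hw : w ≠ o := fun h => ho (by simp [h])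
    have hne : u ≠ w := G.ne_of_adj he
    have := happ ⟨u, hu⟩ ⟨w, hw⟩
    rw [Finset.sum_eq_single ⟨s(u, w), he⟩] at this
    · rw [incVec_mul_incVec_of_ne _ _ _ _ (by simpa using hne), if_pos rfl] at this
      simpa using this
    · intro e _ hne'
      rw [incVec_mul_incVec_of_ne _ _ _ _ (by simpa using hne), if_neg, mul_zero]
      exact fun h => hne' (Subtype.ext h)
    · simp
  funext ⟨e, he⟩
  by_cases ho : o ∈ e
  · obtain ⟨w, rfl⟩ := Sym2.mem_iff_exists.mp ho
    have hw : w ≠ o := (G.ne_of_adj he).symm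
    have := happ ⟨w, hw⟩ ⟨w, hw⟩
    rw [Finset.sum_eq_single ⟨s(o, w), he⟩] at this
    · rw [incVec_sq _ _ (G.not_isDiag_of_mem_edgeSet he)] at this
      simpa using this
    · rintro ⟨e', he'⟩ _ hne'
      rw [incVec_sq _ _ (G.not_isDiag_of_mem_edgeSet he')]
      split_ifs with hmem
      · rw [hoff ⟨e', he'⟩ ?_, zero_mul]
        intro ho'
        exact hne' (Subtype.ext ((Sym2.mem_and_mem_iff hw.symm).mp ⟨ho', hmem⟩))
      · simp
    · simp
  · exact hoff ⟨e, he⟩ ho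

/-- The indicator of the vertices not reachable from the root is a nonzero kernel vector. -/
theorem det_eq_zero_of_not_connected [Fintype V] {o : V} {ι : Type*} (T : Finset ι) (s : ι → Sym2 V)
    (hT : ¬ (SimpleGraph.fromEdgeSet (s '' (T : Set ι))).Connected) :
    (∑ e ∈ T, vecMulVec (incVec ℤ o (s e)) (incVec ℤ o (s e))).det = 0 := by
  classical
  set K := SimpleGraph.fromEdgeSet (s '' (T : Set ι)) with hK
  obtain ⟨u, hu⟩ : ∃ u, ¬ K.Reachable o u := by
    by_contra! h
    exact hT (SimpleGraph.connected_iff_exists_forall_reachable _ |>.mpr ⟨o, h⟩)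
  refine exists_mulVec_eq_zero_iff.mp ⟨fun p => if K.Reachable o p.1 then 0 else 1, ?_, ?_⟩
  · intro h
    have huo : u ≠ o := by rintro rfl; exact hu (SimpleGraph.Reachable.refl _)
    have := congrFun h ⟨u, huo⟩
    simp [hu] at this
  · have := sum_vecMulVec_mulVec T (fun e => incVec ℤ o (s e)) (fun _ => 1)
      (fun p => if K.Reachable o p.1 then 0 else 1)
    simp only [one_smul, one_mul] at this
    rw [this]
    refine Finset.sum_eq_zero fun e he => ?_
    have hext : ∀ x : V, extZero (o := o) (fun p => if K.Reachable o p.1 then (0 : ℤ) else 1) x =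
        if K.Reachable o x then 0 else 1 := by
      intro x
      unfold extZero
      split_ifs with h1 h2 h2 <;> simp_all
    rw [incVec_dotProduct, hext, hext]
    have hiff : K.Reachable o (ends (s e)).1 ↔ K.Reachable o (ends (s e)).2 := by
      by_cases hd : (ends (s e)).1 = (ends (s e)).2
      · rw [hd]
      · have hadj : K.Adj (ends (s e)).1 (ends (s e)).2 := by
          rw [hK, SimpleGraph.fromEdgeSet_adj]
          exact ⟨⟨e, he, (ends_spec _).symm⟩, hd⟩
        exact ⟨fun h => h.trans hadj.reachable, fun h => h.trans hadj.symm.reachable⟩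
    simp [hiff]

/-- The walks to the root express every standard basis vector as an integer combination of the
incidence vectors, so the square incidence matrix is invertible over `ℤ` and has determinant `±1`. -/
theorem det_eq_one_of_connected [Fintype V] {o : V} {ι : Type*} (T : Finset ι) (s : ι → Sym2 V)
    (hcard : T.card = Fintype.card {v : V // v ≠ o})
    (hT : (SimpleGraph.fromEdgeSet (s '' (T : Set ι))).Connected) :
    (∑ e ∈ T, vecMulVec (incVec ℤ o (s e)) (incVec ℤ o (s e))).det = 1 := by
  classical
  set K := SimpleGraph.fromEdgeSet (s '' (T : Set ι)) with hK
  have τ : {v : V // v ≠ o} ≃ T := Fintype.equivOfCardEq (by simp [hcard])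
  set B : Matrix {v : V // v ≠ o} {v : V // v ≠ o} ℤ :=
    Matrix.of fun p q => incVec ℤ o (s (τ q)) p with hB
  have hL : ∑ e ∈ T, vecMulVec (incVec ℤ o (s e)) (incVec ℤ o (s e)) = B * Bᵀ := by
    ext p q
    rw [Matrix.sum_apply, mul_apply, ← Finset.sum_coe_sort, ← τ.sum_comp]
    simp [hB, vecMulVec_apply]
  let δ : V → {v : V // v ≠ o} → ℤ := fun u p => if p.1 = u then 1 else 0
  have hrange : ∀ u, δ u ∈ LinearMap.range B.mulVecLin := by
    have hcol : ∀ e ∈ T, incVec ℤ o (s e) ∈ LinearMap.range B.mulVecLin := by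
      intro e he
      refine ⟨Pi.single (τ.symm ⟨e, he⟩) 1, ?_⟩
      ext p
      simp [hB]
    have hstep : ∀ u w, K.Adj u w → δ u ∈ LinearMap.range B.mulVecLin →
        δ w ∈ LinearMap.range B.mulVecLin := by
      intro u w huw hu
      rw [hK, SimpleGraph.fromEdgeSet_adj] at huw
      obtain ⟨⟨e, he, hes⟩, -⟩ := huw
      have hc := hcol e he
      have hinc : incVec ℤ o (s e) = δ (ends (s e)).1 - δ (ends (s e)).2 := rfl
      rw [hinc] at hc
      rcases Sym2.eq_iff.mp ((ends_spec (s e)).trans hes) with ⟨h1, h2⟩ | ⟨h1, h2⟩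
      · rw [h1, h2] at hc
        simpa using sub_mem hu hc
      · rw [h1, h2] at hc
        simpa using add_mem hc hu
    have hwalk : ∀ {x y : V} (W : K.Walk x y), δ x ∈ LinearMap.range B.mulVecLin →
        δ y ∈ LinearMap.range B.mulVecLin := by
      intro x y W
      induction W with
      | nil => exact id
      | cons hadj _ ih => exact fun h => ih (hstep _ _ hadj h)
    intro u
    obtain ⟨W⟩ := hT.preconnected o u
    refine hwalk W ?_
    have : δ o = 0 := by
      funext p
      simp [δ, p.2]
    rw [this]
    exact zero_mem _
  choose P hP using hrange
  have hBP : B * Matrix.of (fun p q : {v : V // v ≠ o} => P q.1 p) = 1 := by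
    ext p q
    have := congrFun (hP q.1) p
    simp only [mulVecLin_apply, mulVec, dotProduct] at this
    rw [mul_apply, one_apply]
    simp only [of_apply]
    rw [this]
    simp [δ, Subtype.ext_iff]
  have hunit : IsUnit B.det := IsUnit.of_mul_eq_one _ (by rw [← det_mul, hBP, det_one])
  rw [hL, det_mul, det_transpose]
  exact Int.isUnit_mul_self hunit
end Graph

/-! ### Rank-two updates -/

section Update
variable {m : Type*} [Fintype m] [DecidableEq m]

/-- The matrix determinant lemma for a symmetric update of rank two. -/
theorem det_add_vecMulVec_two {L : Matrix m m ℝ} (hL : L.PosDef) (v w : m → ℝ) :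
    (L + vecMulVec v v + vecMulVec w w).det =
      L.det * ((1 + v ⬝ᵥ (L⁻¹ *ᵥ v)) * (1 + w ⬝ᵥ (L⁻¹ *ᵥ w)) - (v ⬝ᵥ (L⁻¹ *ᵥ w)) ^ 2) := by
  set U : Matrix m (Fin 2) ℝ := Matrix.of fun p => ![v p, w p] with hU
  have hUU : L + vecMulVec v v + vecMulVec w w = L + U * Uᵀ := by
    ext p q
    simp [hU, mul_apply, Fin.sum_univ_two, vecMulVec_apply, add_assoc]
  have hent : ∀ x y : Fin 2, (Uᵀ * L⁻¹ * U) x y = Uᵀ x ⬝ᵥ (L⁻¹ *ᵥ Uᵀ y) := by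
    intro x y
    rw [Matrix.mul_assoc, mul_apply_eq_vecMul, vecMul_eq_sum]
    simp [dotProduct, mulVec, mul_apply]
  have h0 : Uᵀ 0 = v := by ext p; simp [hU]
  have h1 : Uᵀ 1 = w := by ext p; simp [hU]
  have hsymm : w ⬝ᵥ (L⁻¹ *ᵥ v) = v ⬝ᵥ (L⁻¹ *ᵥ w) := by
    have ht : (L⁻¹)ᵀ = L⁻¹ := by
      have := hL.inv.isHermitian.eq
      rwa [conjTranspose_eq_transpose_of_trivial] at this
    rw [dotProduct_mulVec, ← mulVec_transpose, ht, dotProduct_comm]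
  rw [hUU, det_add_mul _ _ hL.det_pos.ne'.isUnit, det_fin_two]
  rw [Matrix.add_apply, Matrix.add_apply, Matrix.add_apply, Matrix.add_apply, one_apply_eq,
    one_apply_eq, one_apply_ne zero_ne_one, one_apply_ne one_ne_zero, hent, hent, hent, hent,
    h0, h1, hsymm]
  ring

end Update

/-! ### The Kirchhoff polynomial and its derivatives -/

section Kirchhoff
variable {V : Type} [Fintype V] [DecidableEq V] (G : SimpleGraph V) [Fintype G.edgeSet]

/-- The weighted Laplacian with the row and column of the root `o` deleted. -/
noncomputable def redLap (o : V) (x : G.edgeSet → ℝ) :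
    Matrix {v : V // v ≠ o} {v : V // v ≠ o} ℝ :=
  ∑ e, x e • vecMulVec (incVec ℝ o e.1) (incVec ℝ o e.1)

/-- The weighted matrix-tree theorem. -/
theorem eval_kirchhoff (o : V) (x : G.edgeSet → ℝ) :
    eval x (kirchhoff G) = (redLap G o x).det := by
  classical
  have hc : Fintype.card {v : V // v ≠ o} = Fintype.card V - 1 := by simp
  rw [redLap, det_sum_vecMulVec (fun e : G.edgeSet => incVec ℝ o e.1) x, kirchhoff, map_sum]
  refine Finset.sum_congr rfl fun T _ => ?_
  have hcast : (∑ e ∈ T, vecMulVec (incVec ℝ o e.1) (incVec ℝ o e.1)).det =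
      ((∑ e ∈ T, vecMulVec (incVec ℤ o e.1) (incVec ℤ o e.1)).det : ℝ) := by
    rw [← eq_intCast (Int.castRingHom ℝ), RingHom.map_det]
    congr 1
    ext p q
    simp [Matrix.sum_apply, vecMulVec_apply, incVec]
  rw [hcast]
  by_cases hT : T.card = Fintype.card {v : V // v ≠ o}
  · rw [if_pos hT]
    by_cases hcon : (SimpleGraph.fromEdgeSet (Subtype.val '' (T : Set G.edgeSet))).Connected
    · rw [if_pos ⟨hT.trans hc, hcon⟩, det_eq_one_of_connected T Subtype.val hT hcon]
      simp
    · rw [if_neg fun h => hcon h.2, det_eq_zero_of_not_connected T Subtype.val hcon]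
      simp
  · rw [if_neg hT, if_neg fun h => hT (h.1.trans hc.symm), map_zero]

theorem kirchhoff_isMultiaffine : IsMultiaffine (kirchhoff G) := by
  refine Submodule.sum_mem _ fun T _ => ?_
  split_ifs
  · exact Submodule.subset_span ⟨T, rfl⟩
  · exact zero_mem _

theorem kirchhoff_isHomogeneous : (kirchhoff G).IsHomogeneous (Fintype.card V - 1) := by
  refine IsHomogeneous.sum _ _ _ fun T _ => ?_
  split_ifs with h
  · have := IsHomogeneous.prod T (fun e => (X e : MvPolynomial G.edgeSet ℝ)) (fun _ => 1)
      fun e _ => isHomogeneous_X ℝ e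
    simpa [h.1] using this
  · exact isHomogeneous_zero _ _ _

/-- The Gram matrix `v_iᵀ L⁻¹ v_j` of the incidence vectors with respect to the inverse of the
reduced Laplacian `L` at `a`. -/
noncomputable def resGram (o : V) (a : G.edgeSet → ℝ) (i j : G.edgeSet) : ℝ :=
  incVec ℝ o i.1 ⬝ᵥ ((redLap G o a)⁻¹ *ᵥ incVec ℝ o j.1)

theorem redLap_add_single (o : V) (a : G.edgeSet → ℝ) (i : G.edgeSet) :
    redLap G o (a + Pi.single i 1) =
      redLap G o a + vecMulVec (incVec ℝ o i.1) (incVec ℝ o i.1) := by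
  simp only [redLap, Pi.add_apply, add_smul, Finset.sum_add_distrib]
  congr 1
  rw [Finset.sum_eq_single i] <;> simp +contextual

variable {G}

theorem eval_pderiv_kirchhoff (hG : G.Connected) (o : V) {a : G.edgeSet → ℝ}
    (ha : ∀ e, 0 < a e) (i : G.edgeSet) :
    eval a (pderiv i (kirchhoff G)) = eval a (kirchhoff G) * resGram G o a i i := by
  have hL : (redLap G o a).PosDef := laplacian_posDef G hG ha
  have h := (kirchhoff_isMultiaffine G).eval_add_single i a
  have h2 := det_add_vecMulVec_two hL (incVec ℝ o i.1) 0
  simp only [vecMulVec_zero, add_zero, mulVec_zero, dotProduct_zero] at h2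
  rw [eval_kirchhoff G o, eval_kirchhoff G o, redLap_add_single, h2] at h
  rw [eval_kirchhoff G o, resGram]
  linarith

theorem eval_pderiv_pderiv_kirchhoff (hG : G.Connected) (o : V) {a : G.edgeSet → ℝ}
    (ha : ∀ e, 0 < a e) (i j : G.edgeSet) :
    eval a (pderiv i (pderiv j (kirchhoff G))) = eval a (kirchhoff G) *
      (resGram G o a i i * resGram G o a j j - resGram G o a i j ^ 2) := by
  by_cases hij : i = j
  · subst hij
    rw [(kirchhoff_isMultiaffine G).pderiv_pderiv_self]
    simp [sq]
  have hL : (redLap G o a).PosDef := laplacian_posDef G hG ha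
  have hmul := kirchhoff_isMultiaffine G
  have h1 := hmul.eval_add_single j (a + Pi.single i 1)
  rw [hmul.eval_add_single i a, (hmul.pderiv j).eval_add_single i a,
    eval_pderiv_kirchhoff hG o ha, eval_pderiv_kirchhoff hG o ha, eval_kirchhoff G o,
    redLap_add_single, redLap_add_single, det_add_vecMulVec_two hL, eval_kirchhoff G o] at h1
  rw [eval_kirchhoff G o]
  change _ * ((1 + resGram G o a i i) * (1 + resGram G o a j j) - resGram G o a i j ^ 2) = _ at h1
  linarith

end Kirchhoff

/-- for a finite connected simple graph `Γ` with `r + 1 ≥ 3` vertices and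
`n ≥ 3` edges, a point `a` of the open positive orthant, and `0 ≤ ℓ ≤ r - 2`, the iterated
directional derivative `∂_a^ℓ F_Γ` (homogeneous of degree `r - ℓ`) is strictly homogeneous
log-concave at `a`; in particular its Hessian at `a` is nonsingular with exactly one positive
and `n - 1` negative eigenvalues. -/
theorem iterated_dirDeriv_kirchhoff_strictly_homog_logConcave
    {V : Type} [Fintype V] [DecidableEq V] (G : SimpleGraph V) [Fintype G.edgeSet]
    (hconn : G.Connected) (r n : ℕ)
    (hV : Fintype.card V = r + 1) (hr : 3 ≤ r + 1)
    (hE : Fintype.card G.edgeSet = n) (hn : 3 ≤ n)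
    (a : G.edgeSet → ℝ) (ha : ∀ e, 0 < a e)
    (ℓ : ℕ) (hℓ : ℓ ≤ r - 2)
    (Fℓ : MvPolynomial G.edgeSet ℝ)
    (hFℓ : Fℓ = (fun P : MvPolynomial G.edgeSet ℝ =>
      ∑ i : G.edgeSet, a i • pderiv i P)^[ℓ] (kirchhoff G))
    (H : Matrix G.edgeSet G.edgeSet ℝ)
    (hH : H = Matrix.of fun i j : G.edgeSet => eval a (pderiv i (pderiv j Fℓ))) :
    (∀ s : ℝ, (((r - ℓ : ℕ) : ℝ) - 1) / ((r - ℓ : ℕ) : ℝ) < s →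
      (Matrix.of fun i j : G.edgeSet =>
        -(eval a Fℓ) * eval a (pderiv i (pderiv j Fℓ))
          + s * (eval a (pderiv i Fℓ) * eval a (pderiv j Fℓ))).PosDef) ∧
    H.det ≠ 0 ∧
    ∃ hherm : H.IsHermitian,
      (Finset.univ.filter fun i => 0 < hherm.eigenvalues i).card = 1 ∧
      (Finset.univ.filter fun i => hherm.eigenvalues i < 0).card = n - 1 := by
  have hr2 : 2 ≤ r := by omega
  obtain ⟨o⟩ := hconn.nonempty
  have hD : Fℓ = (dirDeriv a)^[ℓ] (kirchhoff G) := hFℓ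
  have hhom : (kirchhoff G).IsHomogeneous r := by
    have := kirchhoff_isHomogeneous G
    rwa [hV, Nat.add_sub_cancel] at this
  have hL : (redLap G o a).PosDef := laplacian_posDef G hconn ha
  set F : ℝ := eval a (kirchhoff G) with hF
  have hFpos : 0 < F := by rw [hF, eval_kirchhoff G o]; exact hL.det_pos
  set c₀ : ℝ := (r.descFactorial ℓ : ℝ) with hc₀
  set c₁ : ℝ := ((r - 1).descFactorial ℓ : ℝ) with hc₁
  set c₂ : ℝ := ((r - 1 - 1).descFactorial ℓ : ℝ) with hc₂
  have hc₀pos : 0 < c₀ := by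
    rw [hc₀]; exact_mod_cast Nat.descFactorial_pos.mpr (by omega)
  have hc₂pos : 0 < c₂ := by
    rw [hc₂]; exact_mod_cast Nat.descFactorial_pos.mpr (by omega)
  have hc₁pos : 0 < c₁ := by
    rw [hc₁]; exact_mod_cast Nat.descFactorial_pos.mpr (by omega)
  set K := resGram G o a with hK
  have hval : eval a Fℓ = c₀ * F := by rw [hD, eval_iterate_dirDeriv a ℓ hhom]
  have hgrad : ∀ i, eval a (pderiv i Fℓ) = c₁ * (F * K i i) := by
    intro i
    rw [hD, pderiv_iterate_dirDeriv, eval_iterate_dirDeriv a ℓ hhom.pderiv,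
      eval_pderiv_kirchhoff hconn o ha]
  have hhess : ∀ i j, eval a (pderiv i (pderiv j Fℓ)) =
      c₂ * (F * (K i i * K j j - K i j ^ 2)) := by
    intro i j
    rw [hD, pderiv_iterate_dirDeriv, pderiv_iterate_dirDeriv,
      eval_iterate_dirDeriv a ℓ hhom.pderiv.pderiv, eval_pderiv_pderiv_kirchhoff hconn o ha]
  -- The threshold `(m - 1) / m` with `m = r - ℓ` matches `(r - 1) / r` for `ℓ = 0` through the
  -- relations `hA` and `hB` between the falling factorials.
  obtain ⟨m, hm⟩ : ∃ m, r = m + ℓ := ⟨r - ℓ, by omega⟩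
  have hm2 : 2 ≤ m := by omega
  have hmr : r - ℓ = m := by omega
  have hm2' : (2 : ℝ) ≤ m := by exact_mod_cast hm2
  have hA : (r : ℝ) * c₁ = c₀ * m := by
    have h1 := Nat.succ_descFactorial_succ (r - 1) ℓ
    rw [Nat.sub_add_cancel (by omega), Nat.descFactorial_succ, hmr] at h1
    rw [mul_comm c₀, hc₀, hc₁]
    exact_mod_cast h1.symm
  have hB : ((r : ℝ) - 1) * c₂ = c₁ * ((m : ℝ) - 1) := by
    have h1 := Nat.succ_descFactorial_succ (r - 1 - 1) ℓ
    rw [Nat.sub_add_cancel (by omega), Nat.descFactorial_succ,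
      show r - 1 - ℓ = m - 1 by omega] at h1
    have h2 : ((m - 1 : ℕ) : ℝ) * c₁ = ((r - 1 : ℕ) : ℝ) * c₂ := by
      rw [hc₁, hc₂]
      exact_mod_cast h1
    rw [Nat.cast_sub (by omega), Nat.cast_sub (by omega)] at h2
    push_cast at h2
    linarith
  have hpd : ∀ s : ℝ, ((m : ℝ) - 1) / m < s →
      (Matrix.of fun i j : G.edgeSet =>
        -(eval a Fℓ) * eval a (pderiv i (pderiv j Fℓ))
          + s * (eval a (pderiv i Fℓ) * eval a (pderiv j Fℓ))).PosDef := by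
    intro s hs
    have hs' : (m : ℝ) - 1 < s * m := (div_lt_iff₀ (by linarith)).mp hs
    have hcard : (Fintype.card {v : V // v ≠ o} : ℝ) = r := by simp [hV]
    have key := gram_form_posDef hL.inv (fun e : G.edgeSet => incVec ℝ o e.1)
      (incVec_linearIndependent G) (α := c₀ * c₂ * F ^ 2)
      (β := s * c₁ ^ 2 * F ^ 2 - c₀ * c₂ * F ^ 2) (by positivity) (by
        rw [hcard]
        have h1 : c₀ * c₂ * F ^ 2 + r * (s * c₁ ^ 2 * F ^ 2 - c₀ * c₂ * F ^ 2) =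
            F ^ 2 * c₀ * c₁ * (s * m - (m - 1)) := by
          linear_combination (F ^ 2 * s * c₁) * hA - (F ^ 2 * c₀) * hB
        rw [h1]
        have : 0 < s * m - (m - 1) := by linarith
        positivity)
    convert key using 1
    ext i j
    simp only [Matrix.of_apply, hval, hgrad, hhess]
    change _ = c₀ * c₂ * F ^ 2 * K i j ^ 2 +
      (s * c₁ ^ 2 * F ^ 2 - c₀ * c₂ * F ^ 2) * (K i i * K j j)
    ring
  refine ⟨by rw [hmr]; exact hpd, ?_⟩
  have hherm : H.IsHermitian := by
    ext i j
    simp only [hH, conjTranspose_apply, of_apply, star_trivial]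
    rw [pderiv_comm']
  have htr : H.trace = 0 := by
    simp only [Matrix.trace, Matrix.diag_apply, hH, of_apply, hhess]
    exact Finset.sum_eq_zero fun i _ => by ring
  have hneg : ∀ y : G.edgeSet → ℝ, y ≠ 0 →
      (fun i => eval a (pderiv i Fℓ)) ⬝ᵥ y = 0 → y ⬝ᵥ (H *ᵥ y) < 0 := by
    intro y hy hgy
    have h1 := (hpd 1 (by rw [div_lt_one (by linarith)]; linarith)).dotProduct_mulVec_pos hy
    have h2 : (Matrix.of fun i j : G.edgeSet =>
        -(eval a Fℓ) * eval a (pderiv i (pderiv j Fℓ))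
          + 1 * (eval a (pderiv i Fℓ) * eval a (pderiv j Fℓ))) =
        (-(eval a Fℓ)) • H + vecMulVec (fun i => eval a (pderiv i Fℓ))
          (fun i => eval a (pderiv i Fℓ)) := by
      ext i j
      simp [hH, vecMulVec_apply]
    rw [h2, add_mulVec, smul_mulVec, vecMulVec_mulVec, hgy, hval, star_trivial] at h1
    simp only [MulOpposite.op_zero, zero_smul, add_zero, dotProduct_smul, smul_eq_mul] at h1
    have : 0 < c₀ * F := by positivity
    nlinarith
  have hsig := signature_of_neg_on_hyperplane (by omega) hherm htr _ hneg
  rw [hE] at hsig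
  exact ⟨hsig.1, hherm, hsig.2⟩
end
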